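/- On a coordinate chart of TM ⊕ TM over a Riemannian manifold (M,g), with f₁ and f₁₂₁ = R∂_x − Γ(R,R)∂_R − Γ(R,V)∂_V as above, the iterated bracket f₁₁₂₁ = [f₁, f₁₂₁] has x-component −V, and its integral curves satisfy ẋ = −V, D_tR = −𝓡(V,R)R, D_tV = −𝓡(V,R)V, where 𝓡 is the Riemann curvature tensor of (M,g). -/

import Mathlib

/-- Lie bracket of vector fields on a normed space (coordinate formula
`[X,Y] = DY·X − DX·Y`). -/
noncomputable def lieBkt {F : Type*} [NormedAddCommGroup F] [NormedSpace ℝ F]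
    (X Y : F → F) : F → F := fun p => fderiv ℝ Y p (X p) - fderiv ℝ X p (Y p)

/-- The Riemann curvature tensor in coordinates:
`𝓡(U,W)Z = ∂_UΓ(W,Z) − ∂_WΓ(U,Z) + Γ(U,Γ(W,Z)) − Γ(W,Γ(U,Z))`. -/
noncomputable def Riem {E : Type*} [NormedAddCommGroup E] [NormedSpace ℝ E]
    (Γ : E → E →L[ℝ] E →L[ℝ] E) (x u w z : E) : E :=
  fderiv ℝ Γ x u w z - fderiv ℝ Γ x w u z + Γ x u (Γ x w z) - Γ x w (Γ x u z)

/-- Product rule for `q ↦ Γ (π q) (A q) (B q)` with `π`, `A`, `B` continuous linear. -/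
theorem hasFDerivAt_christoffel_apply {E F : Type*} [NormedAddCommGroup E] [NormedSpace ℝ E]
    [NormedAddCommGroup F] [NormedSpace ℝ F] {Γ : E → E →L[ℝ] E →L[ℝ] E}
    (hΓ : Differentiable ℝ Γ) (π A B : F →L[ℝ] E) (p : F) :
    ∃ L : F →L[ℝ] E, HasFDerivAt (fun q => Γ (π q) (A q) (B q)) L p ∧
      ∀ q, L q = fderiv ℝ Γ (π p) (π q) (A p) (B p) + Γ (π p) (A q) (B p)
        + Γ (π p) (A p) (B q) := by
  have hπ : HasFDerivAt (fun q => Γ (π q)) ((fderiv ℝ Γ (π p)).comp π) p :=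
    HasFDerivAt.comp (g := Γ) p (hΓ (π p)).hasFDerivAt π.hasFDerivAt
  have hA : HasFDerivAt (fun q => Γ (π q) (A q)) _ p := hπ.clm_apply A.hasFDerivAt
  have h : HasFDerivAt (fun q => Γ (π q) (A q) (B q)) _ p := hA.clm_apply B.hasFDerivAt
  refine ⟨_, h, fun q => ?_⟩
  simp
  abel

/-- on a chart of `TM ⊕ TM` (coordinates `p = (x, R, V)`), with
`f₁` as before and `f₁₂₁ = R∂_x − Γ(R,R)∂_R − Γ(R,V)∂_V`, the iterated bracket
`f₁₁₂₁ = [f₁, f₁₂₁]` has `x`-component `−V`, and its integral curves satisfy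
`ẋ = −V`, `D_tR = −𝓡(V,R)R`, `D_tV = −𝓡(V,R)V` (`D_tW = Ẇ + Γ(ẋ,W)`). -/
theorem stmt12 {E : Type*} [NormedAddCommGroup E] [NormedSpace ℝ E]
    (Γ : E → E →L[ℝ] E →L[ℝ] E) (hΓ : ContDiff ℝ (⊤ : ℕ∞) Γ)
    (hsym : ∀ x u v, Γ x u v = Γ x v u)
    (f₁ f₁₂₁ f₁₁₂₁ : E × E × E → E × E × E)
    (hf₁ : f₁ = fun p => (p.2.2, -(p.2.2 + Γ p.1 p.2.2 p.2.1), p.2.1 - Γ p.1 p.2.2 p.2.2))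
    (hf₁₂₁ : f₁₂₁ = fun p => (p.2.1, -(Γ p.1 p.2.1 p.2.1), -(Γ p.1 p.2.1 p.2.2)))
    (hf₁₁₂₁ : f₁₁₂₁ = lieBkt f₁ f₁₂₁) :
    (∀ p, (f₁₁₂₁ p).1 = -p.2.2) ∧
    (∀ c : ℝ → E × E × E, (∀ t, HasDerivAt c (f₁₁₂₁ (c t)) t) →
      ∀ t, deriv (fun s => (c s).1) t = -(c t).2.2 ∧
        deriv (fun s => (c s).2.1) t
            + Γ ((c t).1) (deriv (fun s => (c s).1) t) ((c t).2.1)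
          = -Riem Γ ((c t).1) ((c t).2.2) ((c t).2.1) ((c t).2.1) ∧
        deriv (fun s => (c s).2.2) t
            + Γ ((c t).1) (deriv (fun s => (c s).1) t) ((c t).2.2)
          = -Riem Γ ((c t).1) ((c t).2.2) ((c t).2.1) ((c t).2.2)) := by
  have hd : Differentiable ℝ Γ := hΓ.differentiable (by simp)
  let X : E × E × E →L[ℝ] E := .fst ℝ E (E × E)
  let S : E × E × E →L[ℝ] E := (ContinuousLinearMap.fst ℝ E E).comp (.snd ℝ E (E × E))
  let T : E × E × E →L[ℝ] E := (ContinuousLinearMap.snd ℝ E E).comp (.snd ℝ E (E × E))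
  have key : ∀ x r v, f₁₁₂₁ (x, r, v) = (-v,
      Γ x v r - Riem Γ x v r r, Γ x v v - Riem Γ x v r v) := by
    intro x r v
    obtain ⟨Lvr, hvr, evr⟩ := hasFDerivAt_christoffel_apply hd X T S (x, r, v)
    obtain ⟨Lvv, hvv, evv⟩ := hasFDerivAt_christoffel_apply hd X T T (x, r, v)
    obtain ⟨Lrr, hrr, err⟩ := hasFDerivAt_christoffel_apply hd X S S (x, r, v)
    obtain ⟨Lrv, hrv, erv⟩ := hasFDerivAt_christoffel_apply hd X S T (x, r, v)
    have h₁ : HasFDerivAt f₁ (T.prod ((-(T + Lvr)).prod (S - Lvv))) (x, r, v) := by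
      rw [hf₁]
      exact T.hasFDerivAt.prodMk
        ((T.hasFDerivAt.add hvr).neg.prodMk (S.hasFDerivAt.sub hvv))
    have h₂ : HasFDerivAt f₁₂₁ (S.prod ((-Lrr).prod (-Lrv))) (x, r, v) := by
      rw [hf₁₂₁]
      exact S.hasFDerivAt.prodMk (hrr.neg.prodMk hrv.neg)
    rw [hf₁₁₂₁, lieBkt, h₁.fderiv, h₂.fderiv, hf₁, hf₁₂₁]
    simp only [ContinuousLinearMap.prod_apply, neg_apply, add_apply, sub_apply, evr, evv, err, erv]
    simp only [X, S, T, ContinuousLinearMap.coe_fst', ContinuousLinearMap.coe_snd',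
      ContinuousLinearMap.comp_apply, Riem, map_neg, map_add, map_sub, neg_apply, add_apply,
      Prod.mk_sub_mk, hsym x r v, hsym x (Γ x v r) r, hsym x (Γ x v r) v]
    refine Prod.ext ?_ (Prod.ext ?_ ?_) <;> dsimp only <;> abel
  refine ⟨fun p => by rw [key p.1 p.2.1 p.2.2], fun c hc t => ?_⟩
  have ht := hc t
  rw [key (c t).1 (c t).2.1 (c t).2.2] at ht
  have hx : HasDerivAt (fun s => (c s).1) _ t := X.hasFDerivAt.comp_hasDerivAt t ht
  have hR : HasDerivAt (fun s => (c s).2.1) _ t := S.hasFDerivAt.comp_hasDerivAt t ht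
  have hV : HasDerivAt (fun s => (c s).2.2) _ t := T.hasFDerivAt.comp_hasDerivAt t ht
  rw [hx.deriv, hR.deriv, hV.deriv]
  refine ⟨by simp [X], ?_, ?_⟩ <;> simp [X, S, T] <;> abel
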